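/- The map β ↦ 2(2−β)/(4 − β + √(16β − 7β²)) is a bijection from (0,2) onto (0,1), whose inverse is the map ᾱ ↦ 2(ᾱ−1)²/(2(ᾱ−1)² + 3ᾱ − 1) from (0,1) onto (0,2). -/

import Mathlib

open Set

lemma f_mem (β : ℝ) (hβ : β ∈ Ioo (0 : ℝ) 2) :
    2 * (2 - β) / (4 - β + Real.sqrt (16 * β - 7 * β ^ 2)) ∈ Ioo (0 : ℝ) 1 := by
  obtain ⟨h0, h2⟩ := hβ
  have hs := Real.sqrt_nonneg (16 * β - 7 * β ^ 2)
  have hP : 0 < 4 - β + Real.sqrt (16 * β - 7 * β ^ 2) := by linarith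
  refine ⟨div_pos (by linarith) hP, ?_⟩
  rw [div_lt_one hP]
  linarith

lemma den_pos (a : ℝ) : 0 < 2 * (a - 1) ^ 2 + 3 * a - 1 := by
  nlinarith [sq_nonneg (4 * a - 1)]

lemma g_mem (a : ℝ) (ha : a ∈ Ioo (0 : ℝ) 1) :
    2 * (a - 1) ^ 2 / (2 * (a - 1) ^ 2 + 3 * a - 1) ∈ Ioo (0 : ℝ) 2 := by
  obtain ⟨h0, h1⟩ := ha
  have hD := den_pos a
  have h3 : 0 < (a - 1) ^ 2 := by
    have : a - 1 ≠ 0 := by linarith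
    positivity
  refine ⟨by positivity, ?_⟩
  rw [div_lt_iff₀ hD]
  nlinarith [mul_pos h0 h0]

lemma gf (β : ℝ) (hβ : β ∈ Ioo (0 : ℝ) 2) (a : ℝ)
    (ha : a = 2 * (2 - β) / (4 - β + Real.sqrt (16 * β - 7 * β ^ 2))) :
    2 * (a - 1) ^ 2 / (2 * (a - 1) ^ 2 + 3 * a - 1) = β := by
  obtain ⟨h0, h2⟩ := hβ
  have hs := Real.sqrt_nonneg (16 * β - 7 * β ^ 2)
  have hq := Real.sq_sqrt (show 0 ≤ 16 * β - 7 * β ^ 2 by nlinarith)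
  set s := Real.sqrt (16 * β - 7 * β ^ 2)
  have hP : 4 - β + s ≠ 0 := by linarith
  rw [div_eq_iff (den_pos a).ne', ha]
  field_simp
  linear_combination (2 * (2 - β)) / 2 * hq

lemma fg (a : ℝ) (ha : a ∈ Ioo (0 : ℝ) 1) (β : ℝ)
    (hβ : β = 2 * (a - 1) ^ 2 / (2 * (a - 1) ^ 2 + 3 * a - 1)) :
    2 * (2 - β) / (4 - β + Real.sqrt (16 * β - 7 * β ^ 2)) = a := by
  have hm := g_mem a ha
  rw [← hβ] at hm
  obtain ⟨h0, h1⟩ := ha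
  have hD := den_pos a
  have hs : Real.sqrt (16 * β - 7 * β ^ 2)
      = 2 * (1 - a) * (1 + 3 * a) / (2 * (a - 1) ^ 2 + 3 * a - 1) := by
    rw [Real.sqrt_eq_iff_mul_self_eq (by nlinarith [hm.1, hm.2])
      (div_nonneg (mul_nonneg (by linarith) (by linarith)) hD.le), hβ]
    have := hD.ne'
    field_simp
    ring
  have hn := Real.sqrt_nonneg (16 * β - 7 * β ^ 2)
  rw [div_eq_iff (by linarith [hm.2]), hs]
  rw [eq_div_iff hD.ne'] at hβ
  have hne := hD.ne'
  apply mul_right_cancel₀ hne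
  have hc := div_mul_cancel₀ (2 * (1 - a) * (1 + 3 * a)) hne
  linear_combination (a - 2) * hβ - a * hc

theorem stmt8 :
    Set.BijOn (fun β : ℝ => 2 * (2 - β) / (4 - β + Real.sqrt (16 * β - 7 * β ^ 2)))
      (Ioo (0 : ℝ) 2) (Ioo (0 : ℝ) 1) ∧
    (∀ β ∈ Ioo (0 : ℝ) 2,
      (fun a : ℝ => 2 * (a - 1) ^ 2 / (2 * (a - 1) ^ 2 + 3 * a - 1))
        ((fun β : ℝ => 2 * (2 - β) / (4 - β + Real.sqrt (16 * β - 7 * β ^ 2))) β) = β) ∧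
    (∀ a ∈ Ioo (0 : ℝ) 1,
      (fun β : ℝ => 2 * (2 - β) / (4 - β + Real.sqrt (16 * β - 7 * β ^ 2)))
        ((fun a : ℝ => 2 * (a - 1) ^ 2 / (2 * (a - 1) ^ 2 + 3 * a - 1)) a) = a) := by
  refine ⟨⟨fun β hβ => f_mem β hβ, ?_, ?_⟩, fun β hβ => gf β hβ _ rfl, fun a ha => fg a ha _ rfl⟩
  · intro x hx y hy hxy
    rw [← gf x hx _ rfl, ← gf y hy _ rfl]
    simp only at hxy
    rw [hxy]
  · intro a ha
    exact ⟨_, g_mem a ha, fg a ha _ rfl⟩
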